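/- Let ρ = e^{2πi/3} ∈ ℍ. The Eisenstein series E4 has a simple zero at ρ, i.e. E4(ρ) = 0 and E4'(ρ) ≠ 0, and its derivatives satisfy E4''(ρ) = 10 · (1+ρ)/(1−ρ) · E4'(ρ). -/

import Mathlib

open Complex Filter Topology

noncomputable section

/-- The nome `q = e^{2πiτ}`. -/
def qq (τ : ℂ) : ℂ := Complex.exp (2 * Real.pi * Complex.I * τ)

/-- The Eisenstein series `E₄(τ) = 1 + 240 Σ_{n≥1} σ₃(n) qⁿ`. -/
def E4 (τ : ℂ) : ℂ := 1 + 240 * ∑' n : ℕ, (∑ d ∈ (n + 1).divisors, (d : ℂ) ^ 3) * qq τ ^ (n + 1)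

/-- The Eisenstein series `E₆(τ) = 1 − 504 Σ_{n≥1} σ₅(n) qⁿ`. -/
def E6 (τ : ℂ) : ℂ := 1 - 504 * ∑' n : ℕ, (∑ d ∈ (n + 1).divisors, (d : ℂ) ^ 5) * qq τ ^ (n + 1)

/-- The normalized elliptic modular function `J = E₄³ / (E₄³ − E₆²)`. -/
def J (τ : ℂ) : ℂ := E4 τ ^ 3 / (E4 τ ^ 3 - E6 τ ^ 2)

/-- The Dedekind eta function `η(τ) = e^{πiτ/12} ∏_{n≥1} (1 − qⁿ)`. -/
def dedekindEta (τ : ℂ) : ℂ := Complex.exp (Real.pi * Complex.I * τ / 12) * ∏' n : ℕ, (1 - qq τ ^ (n + 1))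

/-- The elliptic point `ρ = e^{2πi/3}`. -/
def rho : ℂ := Complex.exp (2 * Real.pi * Complex.I / 3)

/-!
The Serre derivative `∂ₖ f = D f - (k / 12) E₂ f`, where `D = (2πi)⁻¹ d/dτ`, raises the weight of a
modular form by `2`. Modular forms of weight `6` are multiples of `E₆`, so comparing values at `i∞`
gives Ramanujan's identity `∂E₄ = -E₆ / 3`. Since `E₄³ - E₆² = 1728 Δ` never vanishes, `E₄` and `E₆`
have no common zero, hence every zero of `E₄` is simple.

The point `ρ` is fixed by `ST` with automorphy factor `ρ + 1`, a primitive sixth root of unity, so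
a modular form whose weight is not divisible by `6` vanishes at `ρ`. This applies to `E₄` and to
`∂∂E₄`, of weight `8`; the latter gives `D² E₄(ρ) = (5 / 6) E₂(ρ) D E₄(ρ)`. Finally, the
quasimodular transformation law of `E₂` under `ST` determines `E₂(ρ) = (6i / π) (ρ + 1) / (ρ - 1)`.
-/

open UpperHalfPlane hiding I
open ModularForm ModularGroup EisensteinSeries Function.Periodic
open scoped Real Manifold MatrixGroups Derivative

section AtInfinity

lemma tendsto_atImInfty_of_hasSum_qParam {h : ℝ} (hh : 0 < h) {f : ℍ → ℂ} {c : ℕ → ℂ}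
    (hf : ∀ τ : ℍ, HasSum (fun m ↦ c m • qParam h τ ^ m) (f τ)) :
    Tendsto f atImInfty (𝓝 (c 0)) := by
  let g (τ : ℍ) : ℂ := (f τ - c 0) / qParam h τ
  have hg_sum (τ : ℍ) : HasSum (fun m ↦ c (m + 1) • qParam h τ ^ m) (g τ) := by
    have hq : qParam h τ ≠ 0 := qParam_ne_zero _
    have hshift := ((hasSum_nat_add_iff' 1).mpr (hf τ)).div_const (qParam h τ)
    simpa [g, pow_succ, ← mul_assoc, hq] using hshift
  have hg : g =O[atImInfty] (1 : ℍ → ℝ) := isBoundedAtImInfty_of_hasSum_qExpansion hh hg_sum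
  have hq : Tendsto (fun τ : ℍ ↦ qParam h τ) atImInfty (𝓝 0) := qParam_tendsto_atImInfty hh
  have hqg : Tendsto (fun τ : ℍ ↦ qParam h τ * g τ) atImInfty (𝓝 0) :=
    hq.zero_mul_isBoundedUnder_le ((Asymptotics.isBigO_one_iff ℝ).mp hg)
  have hf_eq (τ : ℍ) : c 0 + qParam h τ * g τ = f τ := by
    simp [g, mul_div_cancel₀, qParam_ne_zero]
  simpa using (hqg.const_add (c 0)).congr hf_eq

lemma tendsto_E2_atImInfty : Tendsto E2 atImInfty (𝓝 1) := by
  let c (m : ℕ) : ℂ := if m = 0 then 1 else -24 * ArithmeticFunction.sigma 1 m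
  have hE2 (τ : ℍ) : HasSum (fun m ↦ c m • qParam 1 τ ^ m) (E2 τ) := by
    simpa only [qParam, ofReal_one, div_one] using hasSum_qExpansion_E2 (z := τ)
  exact tendsto_atImInfty_of_hasSum_qParam one_pos hE2

lemma tendsto_E_atImInfty {k : ℕ} (hk : 3 ≤ k) (hk2 : Even k) :
    Tendsto (E hk) atImInfty (𝓝 1) := by
  rw [← E_qExpansion_coeff_zero hk hk2]
  exact tendsto_atImInfty_of_hasSum_qParam one_pos
    (ModularForm.hasSum_qExpansion (E hk) one_pos one_mem_strictPeriods_SL)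

lemma normalizedDerivOfComplex_eq_qParam_mul_deriv_cuspFunction {h : ℝ} (hh : 0 < h) {f : ℍ → ℂ}
    (hper : Function.Periodic (f ∘ ofComplex) h) (hf : MDiff f) (hbdd : IsBoundedAtImInfty f)
    (τ : ℍ) : D f τ = (h : ℂ)⁻¹ * (qParam h τ * deriv (cuspFunction h f) (qParam h τ)) := by
  have hcusp : HasDerivAt (cuspFunction h f) (deriv (cuspFunction h f) (qParam h τ)) (qParam h τ) :=
    (differentiableAt_cuspFunction hh hper hf hbdd (norm_qParam_lt_one hh τ.im_pos)).hasDerivAt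
  have hq : HasDerivAt (qParam h) (qParam h τ * (2 * π * I / h)) τ := by
    have hexp : HasDerivAt (fun z : ℂ ↦ 2 * π * I * z / h) (2 * π * I / h) τ := by
      simpa using ((hasDerivAt_id (τ : ℂ)).const_mul (2 * π * I)).div_const (h : ℂ)
    exact hexp.cexp
  have hcomp : cuspFunction h f ∘ qParam h =ᶠ[𝓝 (τ : ℂ)] f ∘ ofComplex := by
    filter_upwards [isOpen_upperHalfPlaneSet.mem_nhds τ.im_pos] with z hz
    lift z to ℍ using hz
    simpa using eq_cuspFunction z hh.ne' hper
  rw [Derivative.normalizedDerivOfComplex, ← hcomp.deriv_eq, (hcusp.comp (τ : ℂ) hq).deriv]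
  field [two_pi_I_ne_zero, hh.ne']

lemma tendsto_normalizedDerivOfComplex_atImInfty {h : ℝ} (hh : 0 < h) {f : ℍ → ℂ}
    (hper : Function.Periodic (f ∘ ofComplex) h) (hf : MDiff f) (hbdd : IsBoundedAtImInfty f) :
    Tendsto (D f) atImInfty (𝓝 0) := by
  have hq : Tendsto (fun τ : ℍ ↦ qParam h τ) atImInfty (𝓝 0) := qParam_tendsto_atImInfty hh
  have hderiv : ContinuousAt (deriv (cuspFunction h f)) 0 :=
    (analyticAt_cuspFunction_zero hh hper hf hbdd).deriv.continuousAt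
  rw [funext (normalizedDerivOfComplex_eq_qParam_mul_deriv_cuspFunction hh hper hf hbdd)]
  simpa using (hq.mul (hderiv.tendsto.comp hq)).const_mul (h : ℂ)⁻¹

end AtInfinity

section SerreDerivative

variable {k : ℤ}

lemma tendsto_normalizedDerivOfComplex_modularForm (f : ModularForm 𝒮ℒ k) :
    Tendsto (D f) atImInfty (𝓝 0) :=
  tendsto_normalizedDerivOfComplex_atImInfty one_pos
    (SlashInvariantFormClass.periodic_comp_ofComplex f one_mem_strictPeriods_SL)
    (ModularFormClass.holo f) (ModularFormClass.bdd_at_infty f)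

lemma isBoundedAtImInfty_serreDerivative (f : ModularForm 𝒮ℒ k) :
    IsBoundedAtImInfty (Derivative.serreDerivative k f) := by
  have hE2f : IsBoundedAtImInfty (E2 * ⇑f) :=
    isBoundedAtImInfty_E2.mul (ModularFormClass.bdd_at_infty f)
  have hDf : IsBoundedAtImInfty (D f) :=
    (tendsto_normalizedDerivOfComplex_modularForm f).isBigO_one ℝ
  have := hDf.sub (hE2f.const_mul_left (k * 12⁻¹))
  simpa [IsBoundedAtImInfty, BoundedAtFilter, mul_assoc] using this

/-- The Serre derivative `∂ₖ f = D f - (k / 12) E₂ f` of a level one modular form of weight `k`,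
as a modular form of weight `k + 2`. -/
def serreModularForm (f : ModularForm 𝒮ℒ k) : ModularForm 𝒮ℒ (k + 2) where
  toFun := Derivative.serreDerivative k f
  slash_action_eq' := by
    rintro _ ⟨γ, rfl⟩
    exact Derivative.serreDerivative_slash_invariant (ModularFormClass.holo f)
      (f.slash_action_eq' _ ⟨γ, rfl⟩)
  holo' := Derivative.serreDerivative_mdifferentiable k (ModularFormClass.holo f)
  bdd_at_cusps' {c} hc := by
    rw [Subgroup.IsArithmetic.isCusp_iff_isCusp_SL2Z] at hc
    rw [OnePoint.isBoundedAt_iff_forall_SL2Z hc]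
    intro γ _
    rw [Derivative.serreDerivative_slash_invariant (ModularFormClass.holo f)
      (f.slash_action_eq' _ ⟨γ, rfl⟩)]
    exact isBoundedAtImInfty_serreDerivative f

lemma coe_serreModularForm (f : ModularForm 𝒮ℒ k) :
    ⇑(serreModularForm f) = D f - (k * 12⁻¹ : ℂ) • (E2 * f) := by
  ext z
  change D f z - _ = _
  simp [mul_assoc]

lemma tendsto_serreModularForm_atImInfty {f : ModularForm 𝒮ℒ k} {a : ℂ}
    (hf : Tendsto f atImInfty (𝓝 a)) :
    Tendsto (serreModularForm f) atImInfty (𝓝 (-(k * 12⁻¹ * a))) := by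
  rw [coe_serreModularForm, ← zero_sub, ← one_mul a]
  exact (tendsto_normalizedDerivOfComplex_modularForm f).sub
    ((tendsto_E2_atImInfty.mul hf).const_smul (k * 12⁻¹ : ℂ))

lemma serreModularForm_serreModularForm_apply_of_eq_zero {f : ModularForm 𝒮ℒ k} {z : ℍ}
    (hz : f z = 0) :
    serreModularForm (serreModularForm f) z = D (D f) z - (k + 1) / 6 * E2 z * D f z := by
  have hf : MDiff f := ModularFormClass.holo f
  have hDf : MDiff (D f) := Derivative.normalizedDerivOfComplex_mdifferentiable hf
  have hE2f : MDiff (E2 * f) := E2_mdifferentiable.mul hf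
  have hD : D (serreModularForm f) =
      D (D f) - (k * 12⁻¹ : ℂ) • (D E2 * f + E2 * D f) := by
    rw [coe_serreModularForm, Derivative.normalizedDerivOfComplex_sub _ _ hDf
      (hE2f.const_smul _), Derivative.normalizedDerivOfComplex_smul _ _ hE2f,
      Derivative.normalizedDerivOfComplex_mul _ _ E2_mdifferentiable hf]
  rw [coe_serreModularForm (serreModularForm f), hD, coe_serreModularForm]
  simp only [Pi.sub_apply, Pi.smul_apply, Pi.mul_apply, Pi.add_apply, smul_eq_mul, hz]
  push_cast
  ring

end SerreDerivative

section EllipticPoint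

variable {γ : SL(2, ℤ)} {z : ℍ}

lemma eq_zero_of_slash_eq_of_smul_eq {k : ℤ} {f : ℍ → ℂ} (hf : f ∣[k] γ = f) (hγ : γ • z = z)
    (hk : denom γ z ^ k ≠ 1) : f z = 0 := by
  have h : f z * denom γ z ^ (-k) = f z := by
    simpa [ModularForm.SL_slash_apply, hγ] using congrFun hf z
  have hk' : denom γ z ^ (-k) ≠ 1 := by simpa [zpow_neg] using hk
  by_contra hz
  exact hk' (mul_left_cancel₀ hz (h.trans (mul_one _).symm))

lemma modularForm_eq_zero_of_smul_eq {k : ℤ} (f : ModularForm 𝒮ℒ k) (hγ : γ • z = z)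
    (hk : denom γ z ^ k ≠ 1) : f z = 0 :=
  eq_zero_of_slash_eq_of_smul_eq (f.slash_action_eq' _ ⟨γ, rfl⟩) hγ hk

lemma E2_mul_denom_sq_sub_one_of_smul_eq (hγ : γ • z = z) :
    E2 z * (denom γ z ^ 2 - 1) = 6 * I / π * γ 1 0 * denom γ z := by
  have hj : denom γ z ≠ 0 := denom_ne_zero γ z
  have hslash := congrFun (E2_slash_action γ) z
  simp only [ModularForm.SL_slash_apply, hγ, D2, riemannZeta_two, Pi.sub_apply, Pi.smul_apply,
    smul_eq_mul, zpow_neg, zpow_ofNat] at hslash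
  field_simp at hslash ⊢
  linear_combination -hslash

lemma ST_smul_ρ : (S * T) • ρ = ρ := 
  stabilizer_ρ.mpr (by simp)

lemma denom_ST (z : ℍ) : denom (S * T : SL(2, ℤ)) z = z + 1 := by
  simp only [ModularGroup.denom_apply, Matrix.SpecialLinearGroup.coe_mul, coe_S, coe_T]
  simp

end EllipticPoint

section Ramanujan

theorem normalizedDerivOfComplex_E₄ (z : ℍ) : D E₄ z = (E2 z * E₄ z - E₆ z) / 3 := by
  obtain ⟨c, hc⟩ : ∃ c : ℂ, c • E₆ = serreModularForm E₄ :=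
    (finrank_eq_one_iff_of_nonzero' E₆ (E_ne_zero _ ⟨3, rfl⟩)).mp
      (Module.rank_eq_one_iff_finrank_eq_one.mp levelOne_weight_six_rank_one) _
  have hc_apply (z : ℍ) : c * E₆ z = serreModularForm E₄ z := DFunLike.congr_fun hc z
  have hc_eq : c = -(1 / 3) := by
    have hlim := tendsto_serreModularForm_atImInfty
      (tendsto_E_atImInfty (k := 4) (by norm_num) ⟨2, rfl⟩)
    have hlim' := (tendsto_E_atImInfty (k := 6) (by norm_num) ⟨3, rfl⟩).const_mul c
    have := tendsto_nhds_unique (hlim'.congr hc_apply) hlim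
    push_cast at this
    linear_combination this
  have := hc_apply z
  rw [hc_eq, coe_serreModularForm] at this
  simp only [Pi.sub_apply, Pi.smul_apply, Pi.mul_apply, smul_eq_mul] at this
  push_cast at this
  linear_combination -this

lemma E₆_ne_zero_of_E₄_eq_zero {z : ℍ} (hz : E₄ z = 0) : E₆ z ≠ 0 := by
  intro h
  apply discriminant_ne_zero z
  simp [discriminant_eq_E₄_cube_sub_E₆_sq, hz, h]

theorem normalizedDerivOfComplex_E₄_ne_zero {z : ℍ} (hz : E₄ z = 0) : D E₄ z ≠ 0 := by
  simpa [normalizedDerivOfComplex_E₄, hz] using E₆_ne_zero_of_E₄_eq_zero hz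

end Ramanujan

lemma deriv_eq_two_pi_I_mul_normalizedDerivOfComplex {g : ℂ → ℂ} {F : ℍ → ℂ}
    (hgF : ∀ z : ℍ, g z = F z) (z : ℍ) : deriv g z = 2 * π * I * D F z := by
  have h : g =ᶠ[𝓝 (z : ℂ)] F ∘ ofComplex := by
    filter_upwards [isOpen_upperHalfPlaneSet.mem_nhds z.im_pos] with w hw
    lift w to ℍ using hw
    simpa using hgF w
  rw [h.deriv_eq, Derivative.normalizedDerivOfComplex, mul_inv_cancel_left₀ two_pi_I_ne_zero]

lemma iteratedDeriv_two_eq_two_pi_I_sq_mul {g : ℂ → ℂ} {F : ℍ → ℂ} (hF : MDiff F)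
    (hgF : ∀ z : ℍ, g z = F z) (z : ℍ) :
    iteratedDeriv 2 g z = (2 * π * I) ^ 2 * D (D F) z := by
  have hderiv (w : ℍ) : deriv g w = ((2 * π * I : ℂ) • D F) w :=
    deriv_eq_two_pi_I_mul_normalizedDerivOfComplex hgF w
  rw [iteratedDeriv_succ, iteratedDeriv_one,
    deriv_eq_two_pi_I_mul_normalizedDerivOfComplex hderiv,
    Derivative.normalizedDerivOfComplex_smul _ _
      (Derivative.normalizedDerivOfComplex_mdifferentiable hF)]
  simp only [Pi.smul_apply, smul_eq_mul]
  ring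

lemma coe_ρ_eq_rho : (ρ : ℂ) = rho := by
  have harg : 2 * π * I / 3 = ((π - π / 3 : ℝ) : ℂ) * I := by push_cast; ring
  rw [rho, harg, Complex.exp_mul_I, ← ofReal_cos, ← ofReal_sin, Real.cos_pi_sub, Real.sin_pi_sub,
    Real.cos_pi_div_three, Real.sin_pi_div_three]
  apply Complex.ext <;> simp [ρ, neg_div]

lemma E4_coe (z : ℍ) : E4 z = E₄ z := by
  have hbernoulli : bernoulli 4 = -1 / 30 := by
    rw [bernoulli_eq_bernoulli'_of_ne_one (by norm_num), bernoulli'_four]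
  have h := q_expansion_bernoulli (k := 4) (by norm_num) (by decide) z
  rw [h, E4, hbernoulli]
  simp_rw [zpow_natCast]
  rw [tsum_pnat_eq_tsum_succ (f := fun n ↦
    (ArithmeticFunction.sigma (4 - 1) n : ℂ) * cexp (2 * Real.pi * I * z) ^ n)]
  simp only [ArithmeticFunction.sigma_apply, qq]
  push_cast
  norm_num

lemma ρ_add_one_sq : (ρ + 1 : ℂ) ^ 2 = ρ := by
  linear_combination ρ_sq

lemma ρ_sub_one_ne_zero : (ρ - 1 : ℂ) ≠ 0 :=
  sub_ne_zero.mpr (mod_cast ρ.ne_natCast 1)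

lemma E₄_ρ : E₄ ρ = 0 := by
  apply modularForm_eq_zero_of_smul_eq E₄ ST_smul_ρ
  have hpow : (ρ + 1 : ℂ) ^ (4 : ℤ) = -ρ - 1 := calc
    (ρ + 1 : ℂ) ^ (4 : ℤ) = ((ρ + 1) ^ 2) ^ 2 := by rw [← pow_mul, zpow_ofNat]
    _ = -ρ - 1 := by rw [ρ_add_one_sq, ρ_sq]
  rw [denom_ST, hpow]
  intro h
  apply ρ.ne_intCast (-2)
  push_cast
  linear_combination -h

lemma E2_ρ : E2 ρ = 6 * I / π * ((ρ + 1) / (ρ - 1)) := by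
  have h := E2_mul_denom_sq_sub_one_of_smul_eq ST_smul_ρ
  have hST : (S * T) 1 0 = 1 := by decide
  rw [denom_ST, ρ_add_one_sq, hST, Int.cast_one, mul_one] at h
  rw [← mul_div_assoc, eq_div_iff ρ_sub_one_ne_zero, h]

lemma normalizedDerivOfComplex_normalizedDerivOfComplex_E₄_ρ :
    D (D E₄) ρ = 5 / 6 * E2 ρ * D E₄ ρ := by
  have hvanish : serreModularForm (serreModularForm E₄) ρ = 0 := by
    apply modularForm_eq_zero_of_smul_eq _ ST_smul_ρ
    have hpow : (ρ + 1 : ℂ) ^ (4 + 2 + 2 : ℤ) = ρ := calc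
      (ρ + 1 : ℂ) ^ (4 + 2 + 2 : ℤ) = (((ρ + 1) ^ 2) ^ 2) ^ 2 := by
        simp only [← pow_mul, Int.reduceAdd, zpow_ofNat, Nat.reduceMul]
      _ = (-ρ - 1) ^ 2 := by rw [ρ_add_one_sq, ρ_sq]
      _ = ρ := by linear_combination ρ_sq
    rw [denom_ST]
    exact fun h ↦ ρ_sub_one_ne_zero (sub_eq_zero.mpr (hpow.symm.trans h))
  rw [serreModularForm_serreModularForm_apply_of_eq_zero E₄_ρ] at hvanish
  push_cast at hvanish
  linear_combination hvanish

/-- `E₄` has a simple zero at `ρ`, and `E₄''(ρ) = 10·(1+ρ)/(1−ρ)·E₄'(ρ)`. -/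
theorem E4_derivatives_at_rho :
    E4 rho = 0 ∧
    deriv E4 rho ≠ 0 ∧
    iteratedDeriv 2 E4 rho = 10 * ((1 + rho) / (1 - rho)) * deriv E4 rho := by
  rw [← coe_ρ_eq_rho, E4_coe, deriv_eq_two_pi_I_mul_normalizedDerivOfComplex E4_coe,
    iteratedDeriv_two_eq_two_pi_I_sq_mul (ModularFormClass.holo E₄) E4_coe,
    normalizedDerivOfComplex_normalizedDerivOfComplex_E₄_ρ, E2_ρ]
  refine ⟨E₄_ρ, mul_ne_zero two_pi_I_ne_zero (normalizedDerivOfComplex_E₄_ne_zero E₄_ρ), ?_⟩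
  have hρ : (ρ - 1 : ℂ) ≠ 0 := ρ_sub_one_ne_zero
  have hρ' : (1 - ρ : ℂ) ≠ 0 := sub_ne_zero.mpr (sub_ne_zero.mp hρ).symm
  field_simp
  linear_combination 10 * (1 + ρ) * (1 - ρ) * D E₄ ρ * I_sq
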